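/- Let p: A → B be a surjective homomorphism of MV-algebras admitting a homomorphism section s: B → A with p∘s = id_B, and let g: C → B be any homomorphism. Let A×_B C := {(a,c) ∈ A×C : p(a)=g(c)}. Then the canonical homomorphism φ: S(A×_B C) → {(u,v) ∈ S(A)×S(C) : S(p)(u)=S(g)(v)} sending the class of (a,c) to ([a],[c]) is an isomorphism. Hence the semisimplification functor S preserves pullbacks along split epimorphisms, i.e. S is protoadditive. -/

import Mathlib

namespace MVPaper

/-- An MV-algebra: a set with a binary `⊕`, a unary `¬`, and a constant `0`
satisfying the MV-algebra axioms. -/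
class MV (α : Type*) where
  oplus : α → α → α
  neg : α → α
  zero : α
  oplus_assoc : ∀ x y z : α, oplus x (oplus y z) = oplus (oplus x y) z
  oplus_comm : ∀ x y : α, oplus x y = oplus y x
  oplus_zero : ∀ x : α, oplus x zero = x
  neg_neg : ∀ x : α, neg (neg x) = x
  oplus_neg_zero : ∀ x : α, oplus x (neg zero) = neg zero
  lukasiewicz : ∀ x y : α,
    oplus (neg (oplus (neg x) y)) y = oplus (neg (oplus (neg y) x)) x

namespace MV

variable {α : Type*} [MV α]

/-- `1 := ¬0`. -/
def one : α := neg zero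

/-- `x ⊙ y := ¬(¬x ⊕ ¬y)`. -/
def odot (x y : α) : α := neg (oplus (neg x) (neg y))

/-- `x ⊖ y := ¬(¬x ⊕ y)`. -/
def ominus (x y : α) : α := neg (oplus (neg x) y)

/-- `d(x,y) := (x ⊖ y) ⊕ (y ⊖ x)`. -/
def dist (x y : α) : α := oplus (ominus x y) (ominus y x)

/-- The natural order: `x ≤ y` iff `¬x ⊕ y = 1`. -/
def le (x y : α) : Prop := oplus (neg x) y = one

/-- `x ∨ y := (x ⊖ y) ⊕ y`. -/
def sup (x y : α) : α := oplus (ominus x y) y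

/-- `x ∧ y := x ⊙ (¬x ⊕ y)`. -/
def inf (x y : α) : α := odot x (oplus (neg x) y)

/-- `n · a`, the `n`-fold sum `a ⊕ ⋯ ⊕ a`. -/
def nsmul : ℕ → α → α
  | 0, _ => zero
  | n + 1, a => oplus a (nsmul n a)

end MV

/-- Products of MV-algebras, with componentwise operations. -/
instance prodMV {α β : Type*} [MV α] [MV β] : MV (α × β) where
  oplus x y := (MV.oplus x.1 y.1, MV.oplus x.2 y.2)
  neg x := (MV.neg x.1, MV.neg x.2)
  zero := (MV.zero, MV.zero)
  oplus_assoc x y z :=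
    congrArg₂ Prod.mk (MV.oplus_assoc _ _ _) (MV.oplus_assoc _ _ _)
  oplus_comm x y :=
    congrArg₂ Prod.mk (MV.oplus_comm _ _) (MV.oplus_comm _ _)
  oplus_zero x := by
    obtain ⟨a, b⟩ := x
    exact congrArg₂ Prod.mk (MV.oplus_zero a) (MV.oplus_zero b)
  neg_neg x := by
    obtain ⟨a, b⟩ := x
    exact congrArg₂ Prod.mk (MV.neg_neg a) (MV.neg_neg b)
  oplus_neg_zero x :=
    congrArg₂ Prod.mk (MV.oplus_neg_zero _) (MV.oplus_neg_zero _)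
  lukasiewicz x y :=
    congrArg₂ Prod.mk (MV.lukasiewicz _ _) (MV.lukasiewicz _ _)

/-- A homomorphism of MV-algebras: a map preserving `⊕`, `¬` and `0`. -/
structure IsHom {α β : Type*} [MV α] [MV β] (f : α → β) : Prop where
  map_zero : f MV.zero = MV.zero
  map_oplus : ∀ x y : α, f (MV.oplus x y) = MV.oplus (f x) (f y)
  map_neg : ∀ x : α, f (MV.neg x) = MV.neg (f x)

/-- An ideal of an MV-algebra: contains `0`, closed under `⊕`, downward closed. -/
structure IsIdeal {α : Type*} [MV α] (I : Set α) : Prop where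
  zero_mem : MV.zero ∈ I
  oplus_mem : ∀ ⦃x⦄, x ∈ I → ∀ ⦃y⦄, y ∈ I → MV.oplus x y ∈ I
  lower_mem : ∀ ⦃x⦄, x ∈ I → ∀ ⦃y⦄, MV.le y x → y ∈ I

/-- The kernel of a homomorphism. -/
def ker {α β : Type*} [MV α] [MV β] (f : α → β) : Set α := {x | f x = MV.zero}

/-- The radical of an MV-algebra: `Rad(A) = {a | n·a ≤ ¬a for all n}`
(the intersection of all maximal proper ideals). -/
def Rad (α : Type*) [MV α] : Set α :=
  {a | ∀ n : ℕ, MV.le (MV.nsmul n a) (MV.neg a)}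

/-- `P(A) := Rad(A) ∪ ¬Rad(A)`. -/
def PSet (α : Type*) [MV α] : Set α :=
  Rad α ∪ {x | MV.neg x ∈ Rad α}

/-- An MV-algebra is trivial if `0 = 1`. -/
def IsTrivial (α : Type*) [MV α] : Prop := (MV.zero : α) = MV.one

/-- An MV-algebra is semisimple if its radical is trivial. -/
def Semisimple (α : Type*) [MV α] : Prop := Rad α = ({MV.zero} : Set α)

/-- An MV-algebra is perfect if `A = Rad(A) ∪ ¬Rad(A)`. -/
def Perfect (α : Type*) [MV α] : Prop := ∀ a : α, a ∈ PSet α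

/-- `q : α → Q` realizes `Q` as the quotient of `α` by the ideal `I`,
i.e. by the congruence `x ∼ y ↔ d(x,y) ∈ I`. -/
structure IsQuotientBy {α Q : Type*} [MV α] [MV Q] (I : Set α) (q : α → Q) : Prop where
  hom : IsHom q
  surj : Function.Surjective q
  eq_iff : ∀ x y : α, q x = q y ↔ MV.dist x y ∈ I

/-!
If `[a]` and `[c]` have the same image in `S(B)`, then `p a` and `g c` differ only by the radical
elements `p a ⊖ g c` and `g c ⊖ p a`. Homomorphisms preserve radicals, so a section of `p` lifts
these to radical elements `e` and `f` of `A`. By the identity `(x ⊖ (x ⊖ y)) ⊕ (y ⊖ x) = y`, the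
element `(a ⊖ e) ⊕ f` of the class of `a` is mapped by `p` to `g c`, which gives surjectivity.
Injectivity holds because the radical of a product is the product of the radicals.
-/

namespace MV

variable {α β : Type*} [MV α] [MV β]

theorem zero_oplus (x : α) : oplus zero x = x := by
  rw [oplus_comm, oplus_zero]

theorem one_oplus (x : α) : oplus one x = one := by
  rw [oplus_comm, one, oplus_neg_zero]

theorem neg_one : neg (one : α) = zero :=
  neg_neg zero

theorem sup_comm (x y : α) : sup x y = sup y x :=
  lukasiewicz x y

theorem neg_oplus_self (x : α) : oplus (neg x) x = one := by
  have h : sup x one = sup one x := sup_comm x one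
  simpa only [sup, ominus, one, oplus_neg_zero, neg_neg, zero_oplus] using h.symm

theorem ominus_self (x : α) : ominus x x = zero := by
  rw [ominus, neg_oplus_self, neg_one]

theorem ominus_zero (x : α) : ominus x zero = x := by
  rw [ominus, oplus_zero, neg_neg]

theorem zero_ominus (x : α) : ominus zero x = zero := by
  rw [ominus, ← one, one_oplus, neg_one]

theorem dist_zero (x : α) : dist x zero = x := by
  rw [dist, ominus_zero, zero_ominus, oplus_zero]

theorem ominus_ominus_eq_zero (x y : α) : ominus (ominus x y) x = zero := by
  rw [ominus, ominus, neg_neg, oplus_comm (neg x), ← oplus_assoc, neg_oplus_self, oplus_comm,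
    one_oplus, neg_one]

theorem ominus_ominus_self (x y : α) : ominus x (ominus x y) = inf x y :=
  rfl

theorem inf_eq_neg_sup (x y : α) : inf x y = neg (sup (neg y) (neg x)) := by
  rw [inf, odot, sup, ominus, neg_neg, oplus_comm (neg x), oplus_comm (neg x)]

theorem inf_comm (x y : α) : inf x y = inf y x := by
  rw [inf_eq_neg_sup, sup_comm, ← inf_eq_neg_sup]

theorem inf_oplus_ominus (x y : α) : oplus (inf x y) (ominus x y) = x :=
  calc oplus (inf x y) (ominus x y)
    _ = sup x (ominus x y) := rfl
    _ = sup (ominus x y) x := sup_comm _ _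
    _ = x := by rw [sup, ominus_ominus_eq_zero, zero_oplus]

theorem ominus_ominus_oplus_ominus (x y : α) :
    oplus (ominus x (ominus x y)) (ominus y x) = y := by
  rw [ominus_ominus_self, inf_comm, inf_oplus_ominus]

theorem prod_le_iff {x y : α × β} : le x y ↔ le x.1 y.1 ∧ le x.2 y.2 :=
  Prod.ext_iff

end MV

namespace IsHom

variable {α β γ δ : Type*} [MV α] [MV β] [MV γ] [MV δ] {f : α → β}

theorem fst : IsHom (Prod.fst : α × β → α) :=
  ⟨rfl, fun _ _ => rfl, fun _ => rfl⟩

theorem snd : IsHom (Prod.snd : α × β → β) :=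
  ⟨rfl, fun _ _ => rfl, fun _ => rfl⟩

theorem prodMap (hf : IsHom f) {h : γ → δ} (hh : IsHom h) : IsHom (Prod.map f h) where
  map_zero := Prod.ext hf.map_zero hh.map_zero
  map_oplus x y := Prod.ext (hf.map_oplus x.1 y.1) (hh.map_oplus x.2 y.2)
  map_neg x := Prod.ext (hf.map_neg x.1) (hh.map_neg x.2)

theorem map_one (hf : IsHom f) : f MV.one = MV.one := by
  rw [MV.one, hf.map_neg, hf.map_zero, MV.one]

theorem map_ominus (hf : IsHom f) (x y : α) : f (MV.ominus x y) = MV.ominus (f x) (f y) := by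
  rw [MV.ominus, hf.map_neg, hf.map_oplus, hf.map_neg, MV.ominus]

theorem map_nsmul (hf : IsHom f) (n : ℕ) (x : α) : f (MV.nsmul n x) = MV.nsmul n (f x) := by
  induction n with
  | zero => exact hf.map_zero
  | succ n ih => rw [MV.nsmul, hf.map_oplus, ih, MV.nsmul]

theorem map_le (hf : IsHom f) {x y : α} (h : MV.le x y) : MV.le (f x) (f y) := by
  rw [MV.le, ← hf.map_neg, ← hf.map_oplus, h, hf.map_one]

theorem mapsTo_rad (hf : IsHom f) : Set.MapsTo f (Rad α) (Rad β) := fun x hx n => by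
  rw [← hf.map_nsmul, ← hf.map_neg]
  exact hf.map_le (hx n)

theorem surjOn_rad_of_leftInverse {s : β → α} (hs : IsHom s) (h : Function.LeftInverse f s) :
    Set.SurjOn f (Rad α) (Rad β) :=
  (h.leftInvOn _).surjOn hs.mapsTo_rad

end IsHom

theorem rad_prod (α β : Type*) [MV α] [MV β] : Rad (α × β) = Rad α ×ˢ Rad β := by
  ext x
  simp only [Rad, Set.mem_prod, Set.mem_ofPred_eq, MV.prod_le_iff, IsHom.fst.map_nsmul,
    IsHom.snd.map_nsmul, IsHom.fst.map_neg, IsHom.snd.map_neg, forall_and]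

namespace IsQuotientBy

variable {α β Q R : Type*} [MV α] [MV β] [MV Q] [MV R]
  {I : Set α} {J : Set β} {q : α → Q} {r : β → R}

theorem prodMap (hq : IsQuotientBy I q) (hr : IsQuotientBy J r) :
    IsQuotientBy (I ×ˢ J) (Prod.map q r) where
  hom := hq.hom.prodMap hr.hom
  surj := hq.surj.prodMap hr.surj
  eq_iff x y := Prod.ext_iff.trans (and_congr (hq.eq_iff x.1 y.1) (hr.eq_iff x.2 y.2))

theorem map_eq_zero_iff (hq : IsQuotientBy I q) {x : α} : q x = MV.zero ↔ x ∈ I := by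
  rw [← hq.hom.map_zero, hq.eq_iff, MV.dist_zero]

theorem ominus_mem (hq : IsQuotientBy I q) {x y : α} (h : q x = q y) : MV.ominus x y ∈ I := by
  rw [← hq.map_eq_zero_iff, hq.hom.map_ominus, h, MV.ominus_self]

theorem exists_map_eq_of_surjOn (hq : IsQuotientBy I q) (hr : IsQuotientBy J r)
    {p : α → β} (hp : IsHom p) (hIJ : Set.SurjOn p I J) {a : α} {b : β} (h : r (p a) = r b) :
    ∃ a' : α, p a' = b ∧ q a' = q a := by
  obtain ⟨e, he, hpe⟩ := hIJ (hr.ominus_mem h)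
  obtain ⟨f, hf, hpf⟩ := hIJ (hr.ominus_mem h.symm)
  refine ⟨MV.oplus (MV.ominus a e) f, ?_, ?_⟩
  · rw [hp.map_oplus, hp.map_ominus, hpe, hpf, MV.ominus_ominus_oplus_ominus]
  · rw [hq.hom.map_oplus, hq.hom.map_ominus, hq.map_eq_zero_iff.2 he, hq.map_eq_zero_iff.2 hf,
      MV.ominus_zero, MV.oplus_zero]

end IsQuotientBy

theorem S_protoadditive_general {α β γ SA SB SC : Type*}
    [MV α] [MV β] [MV γ] [MV SA] [MV SB] [MV SC]
    {p : α → β} (hp : IsHom p) (hrad : Set.SurjOn p (Rad α) (Rad β)) {g : γ → β}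
    {ηA : α → SA} (hηA : IsQuotientBy (Rad α) ηA)
    {ηB : β → SB} (hηB : IsQuotientBy (Rad β) ηB)
    {ηC : γ → SC} (hηC : IsQuotientBy (Rad γ) ηC)
    {Sp : SA → SB} (hSpnat : Sp ∘ ηA = ηB ∘ p)
    {Sg : SC → SB} (hSgnat : Sg ∘ ηC = ηB ∘ g) :
    (∀ x y : α × γ, ((ηA x.1, ηC x.2) : SA × SC) = (ηA y.1, ηC y.2) ↔
        MV.dist x y ∈ Rad (α × γ)) ∧
    (∀ u : SA, ∀ v : SC, Sp u = Sg v →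
        ∃ x : α × γ, p x.1 = g x.2 ∧ ηA x.1 = u ∧ ηC x.2 = v) := by
  refine ⟨fun x y => ?_, fun u v huv => ?_⟩
  · rw [rad_prod]
    exact (hηA.prodMap hηC).eq_iff x y
  · obtain ⟨a, rfl⟩ := hηA.surj u
    obtain ⟨c, rfl⟩ := hηC.surj v
    have hpg : ηB (p a) = ηB (g c) :=
      (congrFun hSpnat a).symm.trans (huv.trans (congrFun hSgnat c))
    obtain ⟨a', hpa', hηa'⟩ := hηA.exists_map_eq_of_surjOn hηB hp hrad hpg
    exact ⟨(a', c), hpa', hηa', rfl⟩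

/-- The semisimplification functor `S` is protoadditive: it preserves pullbacks
along split epimorphisms. If `p : A → B` is a surjective homomorphism with a
homomorphism section `s` (`p ∘ s = id`) and `g : C → B` is any homomorphism,
then the canonical homomorphism
`φ : S(A ×_B C) → {(u,v) ∈ S(A) × S(C) : S(p) u = S(g) v}`, `[(a,c)] ↦ ([a],[c])`,
is an isomorphism (stated here as: on the pullback `A ×_B C`, the map
`(a,c) ↦ (η_A a, η_C c)` identifies elements exactly up to `Rad(A ×_B C)`, and
hits every point of the pullback of `S(p)` along `S(g)`). -/
theorem S_protoadditive {α β γ SA SB SC : Type*}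
    [MV α] [MV β] [MV γ] [MV SA] [MV SB] [MV SC]
    {p : α → β} (hp : IsHom p) (hps : Function.Surjective p)
    {s : β → α} (hs : IsHom s) (hsec : p ∘ s = id)
    {g : γ → β} (hg : IsHom g)
    {ηA : α → SA} (hηA : IsQuotientBy (Rad α) ηA)
    {ηB : β → SB} (hηB : IsQuotientBy (Rad β) ηB)
    {ηC : γ → SC} (hηC : IsQuotientBy (Rad γ) ηC)
    {Sp : SA → SB} (hSp : IsHom Sp) (hSpnat : Sp ∘ ηA = ηB ∘ p)
    {Sg : SC → SB} (hSg : IsHom Sg) (hSgnat : Sg ∘ ηC = ηB ∘ g) :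
    (∀ x y : α × γ, p x.1 = g x.2 → p y.1 = g y.2 →
        (((ηA x.1, ηC x.2) : SA × SC) = (ηA y.1, ηC y.2) ↔
          MV.dist x y ∈ Rad (α × γ))) ∧
    (∀ u : SA, ∀ v : SC, Sp u = Sg v →
        ∃ x : α × γ, p x.1 = g x.2 ∧ ηA x.1 = u ∧ ηC x.2 = v) := by
  have hrad : Set.SurjOn p (Rad α) (Rad β) := hs.surjOn_rad_of_leftInverse (congrFun hsec)
  have h := S_protoadditive_general hp hrad hηA hηB hηC hSpnat hSgnat
  exact ⟨fun x y _ _ => h.1 x y, h.2⟩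

end MVPaper
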